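/- For every positive integer m, the subgroup K_m = ⟨z^m, w^m⟩ of U generated by z^m = (bc^{-1})^{4m} and w^m = (c^{-1}b)^{4m} is a normal subgroup of U of index |U : K_m| = 2048 m^2, and the quotient group H_m = U/K_m is solvable. -/

import Mathlib

/-- The defining relators of the group `U` on generators `a, b, c` (indexed `0, 1, 2`):
`a^4, b^4, c^4, (ab)^2, (bc)^2, (abc)^2, (a^2b^2)^4, a^2c^2b^2(ac)^2, [a,c⁻¹]b^2`,
where `[x,y] = x⁻¹y⁻¹xy`. -/
def Urels : Set (FreeGroup (Fin 3)) :=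
  {(FreeGroup.of 0) ^ 4, (FreeGroup.of 1) ^ 4, (FreeGroup.of 2) ^ 4,
   (FreeGroup.of 0 * FreeGroup.of 1) ^ 2,
   (FreeGroup.of 1 * FreeGroup.of 2) ^ 2,
   (FreeGroup.of 0 * FreeGroup.of 1 * FreeGroup.of 2) ^ 2,
   ((FreeGroup.of 0) ^ 2 * (FreeGroup.of 1) ^ 2) ^ 4,
   (FreeGroup.of 0) ^ 2 * (FreeGroup.of 2) ^ 2 * (FreeGroup.of 1) ^ 2 *
     (FreeGroup.of 0 * FreeGroup.of 2) ^ 2,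
   (FreeGroup.of 0)⁻¹ * FreeGroup.of 2 * FreeGroup.of 0 * (FreeGroup.of 2)⁻¹ *
     (FreeGroup.of 1) ^ 2}

/-- The finitely presented group `U`. -/
abbrev UGroup : Type := PresentedGroup Urels

/-- The generator `a` of `U`. -/
def Ua : UGroup := PresentedGroup.of 0

/-- The generator `b` of `U`. -/
def Ub : UGroup := PresentedGroup.of 1

/-- The generator `c` of `U`. -/
def Uc : UGroup := PresentedGroup.of 2

/-- The element `z = (bc⁻¹)^4` of `U`. -/
def Uz : UGroup := (Ub * Uc⁻¹) ^ 4

/-- The element `w = (c⁻¹b)^4` of `U`. -/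
def Uw : UGroup := (Uc⁻¹ * Ub) ^ 4

/-- The subgroup `K_m = ⟨z^m, w^m⟩` of `U`. -/
def UK (m : ℕ) : Subgroup UGroup := Subgroup.closure {Uz ^ m, Uw ^ m}

/-- The plane group `p4` over a commutative ring: translations together with quarter turns. -/
@[ext] structure PG (R : Type) where
  x : R
  y : R
  k : Fin 4
deriving DecidableEq

def rtx {R : Type} [CommRing R] (k : Fin 4) (x y : R) : R :=
  match k with
  | 0 => x
  | 1 => y
  | 2 => -x
  | 3 => -y

def rty {R : Type} [CommRing R] (k : Fin 4) (x y : R) : R :=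
  match k with
  | 0 => y
  | 1 => -x
  | 2 => -y
  | 3 => x

namespace PG

instance {R : Type} [CommRing R] : Mul (PG R) :=
  ⟨fun g h => ⟨g.x + rtx g.k h.x h.y, g.y + rty g.k h.x h.y, g.k + h.k⟩⟩
instance {R : Type} [CommRing R] : One (PG R) := ⟨⟨0, 0, 0⟩⟩
instance {R : Type} [CommRing R] : Inv (PG R) :=
  ⟨fun g => ⟨-rtx (-g.k) g.x g.y, -rty (-g.k) g.x g.y, -g.k⟩⟩

theorem mul_def {R : Type} [CommRing R] (g h : PG R) :
  g * h = ⟨g.x + rtx g.k h.x h.y, g.y + rty g.k h.x h.y, g.k + h.k⟩ := rfl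
theorem one_def {R : Type} [CommRing R] : (1 : PG R) = ⟨0, 0, 0⟩ := rfl
theorem inv_def {R : Type} [CommRing R] (g : PG R) :
  g⁻¹ = ⟨-rtx (-g.k) g.x g.y, -rty (-g.k) g.x g.y, -g.k⟩ := rfl

instance {R : Type} [CommRing R] : Group (PG R) :=
  Group.ofLeftAxioms
    (by
      rintro ⟨x, y, k⟩ ⟨x', y', k'⟩ ⟨x'', y'', k''⟩
      simp only [mul_def, add_assoc, PG.mk.injEq, and_true]
      fin_cases k <;> fin_cases k' <;> constructor <;> simp [rtx, rty] <;> ring)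
    (by
      rintro ⟨x, y, k⟩
      simp [mul_def, one_def, rtx, rty])
    (by
      rintro ⟨x, y, k⟩
      simp only [mul_def, one_def, inv_def, PG.mk.injEq]
      fin_cases k <;> simp [rtx, rty])

/-- Change of rings. -/
def red {R S : Type} [CommRing R] [CommRing S] (f : R →+* S) : PG R →* PG S where
  toFun g := ⟨f g.x, f g.y, g.k⟩
  map_one' := by simp [one_def]
  map_mul' := by
    rintro ⟨x, y, k⟩ ⟨x', y', k'⟩
    simp only [mul_def, PG.mk.injEq, and_true]
    fin_cases k <;> simp [rtx, rty]

theorem zpow_x (p : ℤ) : (⟨1, 0, 0⟩ : PG ℤ) ^ p = ⟨p, 0, 0⟩ := by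
  induction p using Int.induction_on with
  | zero => rfl
  | succ n ih => rw [zpow_add_one, ih]; simp [mul_def, rtx, rty]
  | pred n ih => rw [zpow_sub_one, ih]; simp [mul_def, inv_def, rtx, rty]; ring

theorem zpow_y (p : ℤ) : (⟨0, 1, 0⟩ : PG ℤ) ^ p = ⟨0, p, 0⟩ := by
  induction p using Int.induction_on with
  | zero => rfl
  | succ n ih => rw [zpow_add_one, ih]; simp [mul_def, rtx, rty]
  | pred n ih => rw [zpow_sub_one, ih]; simp [mul_def, inv_def, rtx, rty]; ring

theorem pow_k (k : Fin 4) : (⟨0, 0, 1⟩ : PG ℤ) ^ k.val = ⟨0, 0, k⟩ := by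
  fin_cases k <;> rfl

theorem decomp (h : PG ℤ) :
    h = ⟨1, 0, 0⟩ ^ h.x * ⟨0, 1, 0⟩ ^ h.y * ⟨0, 0, 1⟩ ^ h.k.val := by
  rw [zpow_x, zpow_y, pow_k]
  simp [mul_def, rtx, rty]

def equivProd (R : Type) : PG R ≃ R × R × Fin 4 where
  toFun g := (g.x, g.y, g.k)
  invFun g := ⟨g.1, g.2.1, g.2.2⟩
  left_inv _ := rfl
  right_inv _ := rfl

end PG


/-! Relations in `U`. -/
theorem urel {r : FreeGroup (Fin 3)} (h : r ∈ Urels) : PresentedGroup.mk Urels r = 1 :=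
  PresentedGroup.one_of_mem h

theorem ra : Ua ^ 4 = 1 := urel (r := FreeGroup.of 0 ^ 4) (by simp [Urels])
theorem rb : Ub ^ 4 = 1 := urel (r := FreeGroup.of 1 ^ 4) (by simp [Urels])
theorem rc : Uc ^ 4 = 1 := urel (r := FreeGroup.of 2 ^ 4) (by simp [Urels])
theorem rab : (Ua * Ub) ^ 2 = 1 :=
  urel (r := (FreeGroup.of 0 * FreeGroup.of 1) ^ 2) (by simp [Urels])
theorem rbc : (Ub * Uc) ^ 2 = 1 :=
  urel (r := (FreeGroup.of 1 * FreeGroup.of 2) ^ 2) (by simp [Urels])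
theorem rabc : (Ua * Ub * Uc) ^ 2 = 1 :=
  urel (r := (FreeGroup.of 0 * FreeGroup.of 1 * FreeGroup.of 2) ^ 2) (by simp [Urels])
theorem rab4 : (Ua ^ 2 * Ub ^ 2) ^ 4 = 1 :=
  urel (r := (FreeGroup.of 0 ^ 2 * FreeGroup.of 1 ^ 2) ^ 4) (by simp [Urels])
theorem rlong : Ua ^ 2 * Uc ^ 2 * Ub ^ 2 * (Ua * Uc) ^ 2 = 1 :=
  urel (r := FreeGroup.of 0 ^ 2 * FreeGroup.of 2 ^ 2 * FreeGroup.of 1 ^ 2 *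
     (FreeGroup.of 0 * FreeGroup.of 2) ^ 2) (by simp [Urels])
theorem rcomm : Ua⁻¹ * Uc * Ua * Uc⁻¹ * Ub ^ 2 = 1 :=
  urel (r := (FreeGroup.of 0)⁻¹ * FreeGroup.of 2 * FreeGroup.of 0 * (FreeGroup.of 2)⁻¹ *
     (FreeGroup.of 1) ^ 2) (by simp [Urels])

/-! The subgroup generated by `b, c`. -/
def Ux : UGroup := Ub * Uc⁻¹
def Uy : UGroup := Uc⁻¹ * Ub

theorem b_y : Ub * Uy = Ux * Ub := by simp [Ux, Uy, mul_assoc]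

theorem b_x : Ub * Ux = Uy⁻¹ * Ub := by
  have h1 : Ub * Uc * Ub * Uc = 1 := by
    have := rbc; rwa [pow_two, ← mul_assoc] at this
  have h2 : Ub * Ub * Ub * Ub = 1 := by
    have := rb; rwa [pow_succ, pow_succ, pow_two] at this
  have h3 : Uc⁻¹ = Ub * Uc * Ub := by
    rw [inv_eq_iff_mul_eq_one, ← h1]
    have : Ub * Uc * Ub = Uc⁻¹ := eq_inv_of_mul_eq_one_left h1
    rw [this]; simp
  have h4 : Ub⁻¹ = Ub * Ub * Ub := (eq_inv_of_mul_eq_one_left h2).symm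
  have : Ub * (Ub * (Ub * Uc * Ub)) = Ub * Ub * Ub * Uc * Ub := by simp only [mul_assoc]
  rw [Ux, Uy, h3, this, ← h4, ← h3]; simp

theorem xy_comm : Ux * Uy = Uy * Ux := by
  have h1 : Ub * (Uc * (Ub * Uc)) = 1 := by
    have := rbc; simpa only [pow_two, mul_assoc] using this
  have h2 : Uc * (Uc * (Uc * Uc)) = 1 := by
    have := rc; simpa only [pow_succ, pow_zero, one_mul, mul_assoc] using this
  have h3 : Uc⁻¹ * Uc⁻¹ = Uc * Uc := by
    rw [← mul_inv_rev, inv_eq_iff_mul_eq_one]; simpa only [mul_assoc] using h2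
  have h4 : Ub * Uc * Ub = Uc⁻¹ :=
    eq_inv_of_mul_eq_one_left (by simpa only [mul_assoc] using h1)
  have h5 : Uc * Ub = Ub⁻¹ * Uc⁻¹ := by rw [← h4]; group
  calc Ux * Uy = Ub * (Uc⁻¹ * Uc⁻¹) * Ub := by simp only [Ux, Uy, mul_assoc]
    _ = (Ub * Uc) * (Uc * Ub) := by rw [h3]; simp only [mul_assoc]
    _ = (Ub * Uc * Ub) * Ub⁻¹ * (Ub⁻¹ * Uc⁻¹) := by rw [h5]; group
    _ = Uc⁻¹ * (Ub⁻¹ * Ub⁻¹) * Uc⁻¹ := by rw [h4]; simp only [mul_assoc]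
    _ = Uc⁻¹ * (Ub * Ub) * Uc⁻¹ := by
      have : Ub⁻¹ * Ub⁻¹ = Ub * Ub := by
        rw [← mul_inv_rev, inv_eq_iff_mul_eq_one]
        have := rb; simpa only [pow_succ, pow_zero, one_mul, mul_assoc] using this
      rw [this]
    _ = Uy * Ux := by simp only [Ux, Uy, mul_assoc]

theorem xy_zcomm (p q : ℤ) : Ux ^ p * Uy ^ q = Uy ^ q * Ux ^ p :=
  (Commute.zpow_zpow (show Commute Ux Uy from xy_comm) p q)

theorem b_yz (q : ℤ) : Ub * Uy ^ q = Ux ^ q * Ub :=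
  (SemiconjBy.zpow_right (show SemiconjBy Ub Uy Ux from b_y) q)

theorem b_xz (q : ℤ) : Ub * Ux ^ q = Uy ^ (-q) * Ub := by
  have := (SemiconjBy.zpow_right (show SemiconjBy Ub Ux Uy⁻¹ from b_x) q)
  rw [inv_zpow'] at this
  exact this

theorem b_v (p q : ℤ) : Ub * (Ux ^ p * Uy ^ q) = Ux ^ q * Uy ^ (-p) * Ub := by
  rw [← mul_assoc, b_xz, mul_assoc, b_yz, ← mul_assoc, xy_zcomm]

theorem bk_v (k : Fin 4) (p q : ℤ) :
    Ub ^ k.val * (Ux ^ p * Uy ^ q) = Ux ^ (rtx k p q) * Uy ^ (rty k p q) * Ub ^ k.val := by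
  fin_cases k
  · simp [rtx, rty]
  · simpa [rtx, rty] using b_v p q
  · simp only [rtx, rty, pow_two, mul_assoc Ub, b_v]
    rw [← mul_assoc, b_v, mul_assoc]
  · calc Ub ^ 3 * (Ux ^ p * Uy ^ q) = Ub * (Ub * (Ub * (Ux ^ p * Uy ^ q))) := by
          simp only [pow_succ, pow_zero, one_mul, mul_assoc]
      _ = Ub * (Ub * (Ux ^ q * Uy ^ (-p)) * Ub) := by rw [b_v]; simp only [mul_assoc]
      _ = Ub * (Ux ^ (-p) * Uy ^ (-q)) * Ub * Ub := by rw [b_v]; simp only [mul_assoc]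
      _ = Ux ^ (-q) * Uy ^ p * Ub ^ 3 := by
          rw [b_v, neg_neg]; simp only [pow_succ, pow_zero, one_mul, mul_assoc]

theorem bk_add (k l : Fin 4) : Ub ^ k.val * Ub ^ l.val = Ub ^ (k + l).val := by
  rw [← pow_add, Fin.val_add]
  exact pow_eq_pow_mod _ rb

/-- The embedding of the plane group. -/
def psi : PG ℤ →* UGroup where
  toFun h := Ux ^ h.x * Uy ^ h.y * Ub ^ h.k.val
  map_one' := by simp [PG.one_def]
  map_mul' := by
    rintro ⟨x, y, k⟩ ⟨x', y', k'⟩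
    simp only [PG.mul_def]
    rw [← bk_add, zpow_add, zpow_add]
    calc _ = Ux ^ x * (Ux ^ rtx k x' y' * Uy ^ y) * Uy ^ rty k x' y' *
          (Ub ^ k.val * Ub ^ k'.val) := by simp only [mul_assoc]
      _ = Ux ^ x * Uy ^ y * (Ux ^ rtx k x' y' * Uy ^ rty k x' y' * Ub ^ k.val) * Ub ^ k'.val := by
        rw [xy_zcomm]; simp only [mul_assoc]
      _ = _ := by rw [← bk_v]; simp only [mul_assoc]

theorem psi_apply (h : PG ℤ) : psi h = Ux ^ h.x * Uy ^ h.y * Ub ^ h.k.val := rfl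

/-! The coset table of `⟨b, c⟩` with its labels. -/
def sg : Fin 3 → Fin 32 → Fin 32 := ![
  ![1, 2, 3, 0, 7, 10, 5, 12, 14, 16, 18, 15, 20, 21, 22, 24, 26, 23, 6, 8, 4, 29, 19, 30, 28, 13, 31, 17, 11, 25, 27, 9],
  ![0, 3, 4, 6, 8, 2, 7, 1, 5, 15, 19, 10, 18, 11, 20, 25, 27, 9, 28, 13, 23, 22, 21, 29, 31, 17, 26, 24, 30, 14, 12, 16],
  ![0, 1, 5, 7, 9, 8, 11, 13, 15, 17, 3, 6, 18, 10, 23, 2, 24, 25, 12, 19, 27, 21, 22, 16, 14, 4, 26, 20, 30, 29, 28, 31]]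

def kp : Fin 3 → Fin 32 → PG ℤ := ![
  ![⟨0, 0, 0⟩, ⟨0, 0, 0⟩, ⟨0, 0, 1⟩, ⟨0, 0, 3⟩, ⟨1, 0, 3⟩, ⟨0, 0, 0⟩, ⟨0, 1, 1⟩, ⟨0, 0, 0⟩,
    ⟨0, 0, 0⟩, ⟨0, 0, 0⟩, ⟨0, 0, 0⟩, ⟨0, -2, 2⟩, ⟨0, 0, 0⟩, ⟨0, 0, 0⟩, ⟨0, 0, 0⟩, ⟨0, 0, 0⟩,
    ⟨0, 0, 0⟩, ⟨-1, -2, 2⟩, ⟨1, 0, 3⟩, ⟨0, 1, 2⟩, ⟨0, 1, 1⟩, ⟨0, 0, 0⟩, ⟨0, 1, 2⟩, ⟨0, 0, 0⟩,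
    ⟨1, 1, 1⟩, ⟨0, -1, 3⟩, ⟨1, -1, 0⟩, ⟨-2, -1, 2⟩, ⟨-1, -1, 1⟩, ⟨1, 0, 1⟩, ⟨-1, 1, 0⟩, ⟨-1, 1, 0⟩],
  ![⟨0, 0, 1⟩, ⟨0, 0, 0⟩, ⟨0, 0, 0⟩, ⟨0, 0, 0⟩, ⟨0, 0, 0⟩, ⟨0, 1, 2⟩, ⟨1, 0, 3⟩, ⟨0, 1, 1⟩,
    ⟨0, 1, 2⟩, ⟨1, -1, 0⟩, ⟨0, 0, 0⟩, ⟨-1, 1, 3⟩, ⟨1, 1, 2⟩, ⟨-1, -2, 3⟩, ⟨1, 0, 3⟩, ⟨0, 0, 0⟩,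
    ⟨0, 0, 0⟩, ⟨-2, -1, 2⟩, ⟨0, 0, 0⟩, ⟨1, 0, 2⟩, ⟨-1, -1, 0⟩, ⟨-1, 1, 0⟩, ⟨1, -1, 2⟩, ⟨0, -1, 3⟩,
    ⟨0, 0, 0⟩, ⟨-1, -2, 2⟩, ⟨-1, -1, 1⟩, ⟨0, -2, 1⟩, ⟨0, 0, 2⟩, ⟨1, -1, 2⟩, ⟨1, 1, 0⟩, ⟨-2, 0, 3⟩],
  ![⟨-1, 0, 1⟩, ⟨1, 0, 3⟩, ⟨0, 0, 0⟩, ⟨0, 0, 0⟩, ⟨0, 0, 0⟩, ⟨1, -1, 0⟩, ⟨0, 0, 0⟩, ⟨0, 0, 0⟩,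
    ⟨0, 0, 0⟩, ⟨0, 0, 0⟩, ⟨-1, -1, 1⟩, ⟨-1, -1, 2⟩, ⟨1, 0, 2⟩, ⟨-1, 1, 3⟩, ⟨0, 0, 0⟩, ⟨-1, 1, 0⟩,
    ⟨-1, -2, 2⟩, ⟨0, 0, 0⟩, ⟨2, -1, 0⟩, ⟨2, 1, 3⟩, ⟨-2, 1, 0⟩, ⟨2, -1, 1⟩, ⟨1, 0, 1⟩, ⟨-2, -1, 2⟩,
    ⟨-1, 1, 0⟩, ⟨0, 0, 0⟩, ⟨0, -1, 1⟩, ⟨-1, 0, 2⟩, ⟨0, -1, 2⟩, ⟨0, -1, 3⟩, ⟨1, 2, 0⟩, ⟨-2, -1, 3⟩]]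

def wd : Fin 32 → List (Fin 3) :=
  ![[], [0], [0, 0], [1, 0], [1, 0, 0], [2, 0, 0], [1, 1, 0], [2, 1, 0],
    [1, 1, 0, 0], [2, 1, 0, 0], [0, 2, 0, 0], [2, 1, 1, 0], [0, 2, 1, 0], [2, 2, 1, 0], [0, 1, 1, 0, 0], [2, 1, 1, 0, 0],
    [0, 2, 1, 0, 0], [2, 2, 1, 0, 0], [0, 0, 2, 0, 0], [1, 0, 2, 0, 0], [0, 0, 2, 1, 0], [0, 2, 2, 1, 0], [0, 0, 1, 1, 0, 0], [2, 0, 1, 1, 0, 0],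
    [0, 2, 1, 1, 0, 0], [1, 2, 1, 1, 0, 0], [0, 0, 2, 1, 0, 0], [1, 0, 2, 1, 0, 0], [1, 0, 0, 2, 0, 0], [0, 0, 2, 2, 1, 0], [0, 2, 0, 1, 1, 0, 0], [1, 0, 2, 1, 1, 0, 0]]

def rl : List (List (Fin 3 × Bool)) := [
  [(0, true), (0, true), (0, true), (0, true)],
  [(1, true), (1, true), (1, true), (1, true)],
  [(2, true), (2, true), (2, true), (2, true)],
  [(0, true), (1, true), (0, true), (1, true)],
  [(1, true), (2, true), (1, true), (2, true)],
  [(0, true), (1, true), (2, true), (0, true), (1, true), (2, true)],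
  [(0, true), (0, true), (1, true), (1, true), (0, true), (0, true), (1, true), (1, true), (0, true), (0, true), (1, true), (1, true), (0, true), (0, true), (1, true), (1, true)],
  [(0, true), (0, true), (2, true), (2, true), (1, true), (1, true), (0, true), (2, true), (0, true), (2, true)],
  [(0, false), (2, true), (0, true), (2, false), (1, true), (1, true)]]

def crt : List (ℕ × ℕ × Fin 32) := [
  (3, 0, 3), (4, 1, 25), (5, 2, 1), (7, 7, 10), (8, 4, 6), (0, 0, 2), (1, 0, 7), (2, 0, 13), (2, 0, 17),
  (3, 0, 4), (4, 0, 11), (5, 1, 5), (7, 2, 15), (7, 4, 19), (8, 1, 12), (8, 1, 18), (8, 2, 25), (8, 4, 8),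
  (0, 0, 20), (0, 0, 29), (1, 0, 13), (2, 0, 5), (3, 0, 6), (3, 0, 11), (3, 0, 19), (3, 0, 28), (3, 1, 14),
  (4, 0, 9), (4, 1, 11), (4, 1, 19), (5, 1, 23), (5, 2, 24), (6, 3, 29), (7, 0, 18), (7, 4, 25), (7, 7, 30),
  (7, 9, 29), (8, 1, 16), (8, 1, 21), (8, 4, 17), (8, 5, 20), (0, 0, 22), (0, 0, 24), (2, 0, 23), (3, 0, 17),
  (3, 0, 27), (3, 0, 31), (3, 1, 12), (3, 1, 21), (3, 1, 22), (3, 1, 30), (4, 1, 22), (4, 1, 27), (4, 1, 28),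
  (7, 3, 20), (7, 4, 31), (7, 5, 28), (7, 8, 30), (0, 0, 26), (1, 0, 27), (3, 1, 26), (4, 1, 31), (5, 2, 26)]

def gn : Fin 3 → UGroup := ![Ua, Ub, Uc]
def tr (i : Fin 32) : UGroup := ((wd i).map gn).prod

def ev : List (Fin 3 × Bool) → UGroup
  | [] => 1
  | (g, e) :: l => (if e then gn g else (gn g)⁻¹) * ev l

theorem ev_append (l m : List (Fin 3 × Bool)) : ev (l ++ m) = ev l * ev m := by
  induction l with
  | nil => simp [ev]
  | cons p l ih => obtain ⟨g, e⟩ := p; simp [ev, ih, mul_assoc]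

def iw : List (Fin 3 × Bool) → List (Fin 3 × Bool)
  | [] => []
  | (g, e) :: l => iw l ++ [(g, !e)]

theorem ev_iw (l : List (Fin 3 × Bool)) : ev (iw l) = (ev l)⁻¹ := by
  induction l with
  | nil => simp [ev, iw]
  | cons p l ih => obtain ⟨g, e⟩ := p; cases e <;> simp [ev, iw, ih, ev_append]

theorem ev_rotate (l : List (Fin 3 × Bool)) (h : ev l = 1) (k : ℕ) : ev (l.rotate k) = 1 := by
  induction k with
  | zero => simpa using h
  | succ k ih =>
    rw [← List.rotate_rotate]
    cases hl : l.rotate k with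
    | nil => simp [ev]
    | cons p m =>
      rw [hl] at ih
      obtain ⟨g, e⟩ := p
      simp only [List.rotate_cons_succ, List.rotate_zero, ev_append, ev, mul_one] at ih ⊢
      exact mul_eq_one_iff_inv_eq.mpr (inv_eq_of_mul_eq_one_left ih)

theorem ev_rl : ∀ r ∈ rl, ev r = 1 := by
  have := ra; have := rb; have := rc; have := rab; have := rbc; have := rabc
  have := rab4; have := rlong; have := rcomm
  simp only [rl, List.forall_mem_cons, List.not_mem_nil, false_imp_iff, implies_true, and_true]
  refine ⟨?_, ?_, ?_, ?_, ?_, ?_, ?_, ?_, ?_⟩ <;>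
    simp_all [ev, gn, pow_succ, mul_assoc]

def Edge (g : Fin 3) (i : Fin 32) : Prop := gn g * tr i = tr (sg g i) * psi (kp g i)

def trace (K : List (Fin 3 × Fin 32)) :
    List (Fin 3 × Bool) → Fin 32 → PG ℤ → Option (Fin 32 × PG ℤ)
  | [], i, h => some (i, h)
  | (g, e) :: l, i, h =>
    match trace K l i h with
    | none => none
    | some (j, h') =>
      if e then
        (if (g, j) ∈ K then some (sg g j, kp g j * h') else none)
      else
        (if (g, sg g (sg g (sg g j))) ∈ K ∧ sg g (sg g (sg g (sg g j))) = j then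
          some (sg g (sg g (sg g j)), (kp g (sg g (sg g (sg g j))))⁻¹ * h') else none)

theorem trace_ok (K : List (Fin 3 × Fin 32)) (hK : ∀ p ∈ K, Edge p.1 p.2) :
    ∀ (l : List (Fin 3 × Bool)) (i : Fin 32) (h : PG ℤ) (j : Fin 32) (h' : PG ℤ),
      trace K l i h = some (j, h') → ev l * (tr i * psi h) = tr j * psi h' := by
  intro l i h
  induction l with
  | nil =>
    intro j h' H
    simp only [trace, Option.some.injEq, Prod.mk.injEq] at H
    simp [ev, H.1, H.2]
  | cons p l ih =>
    obtain ⟨g, e⟩ := p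
    intro j h' H
    simp only [trace] at H
    cases hT : trace K l i h with
    | none => simp [hT] at H
    | some s =>
      obtain ⟨j0, h0⟩ := s
      have e0 := ih j0 h0 hT
      simp only [hT] at H
      simp only [ev, mul_assoc, e0]
      cases e with
      | true =>
        simp only [if_true] at H ⊢
        split_ifs at H with hm
        have := hK _ hm
        simp only [Edge] at this
        simp only [Option.some.injEq, Prod.mk.injEq] at H
        rw [← mul_assoc, this, ← H.1, ← H.2, map_mul, mul_assoc]
      | false =>
        simp only [Bool.false_eq_true, if_false] at H ⊢
        split_ifs at H with hm
        have := hK _ hm.1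
        simp only [Edge, hm.2] at this
        simp only [Option.some.injEq, Prod.mk.injEq] at H
        rw [inv_mul_eq_iff_eq_mul, ← H.1, ← H.2, map_mul, map_inv, ← mul_assoc, ← mul_assoc, this]
        simp [mul_assoc]

def run : List (ℕ × ℕ × Fin 32) → List (Fin 3 × Fin 32) → List (Fin 3 × Fin 32)
  | [], K => K
  | (r, k, i) :: cs, K =>
    match (rl.getD r []).rotate k with
    | (g, true) :: rest =>
      if trace K (iw rest) i 1 = some (sg g i, kp g i) then run cs ((g, i) :: K) else run cs K
    | _ => run cs K

theorem getD_rl (r : ℕ) : ev (rl.getD r []) = 1 := by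
  by_cases h : r < rl.length
  · rw [List.getD_eq_getElem _ _ h]
    exact ev_rl _ (List.getElem_mem h)
  · rw [List.getD_eq_default _ _ (not_lt.mp h)]; rfl

theorem run_ok : ∀ (cs : List (ℕ × ℕ × Fin 32)) (K : List (Fin 3 × Fin 32)),
    (∀ p ∈ K, Edge p.1 p.2) → ∀ p ∈ run cs K, Edge p.1 p.2 := by
  intro cs
  induction cs with
  | nil => intro K hK; exact hK
  | cons c cs ih =>
    obtain ⟨r, k, i⟩ := c
    intro K hK
    simp only [run]
    split
    · rename_i g rest heq
      split_ifs with ht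
      · apply ih
        intro p hp
        rcases List.mem_cons.mp hp with rfl | hp
        · have h1 := trace_ok K hK _ _ _ _ _ ht
          have h2 := ev_rotate _ (getD_rl r) k
          rw [heq] at h2
          simp only [ev, if_true] at h2
          rw [ev_iw, ← eq_inv_of_mul_eq_one_left h2, map_one, mul_one] at h1
          exact h1
        · exact hK p hp
      · exact ih K hK
    · exact ih K hK

def K0 : List (Fin 3 × Fin 32) :=
  (1, 0) :: (2, 0) :: ((List.finRange 3).product (List.finRange 32)).filter
    fun p => decide (wd (sg p.1 p.2) = p.1 :: wd p.2 ∧ kp p.1 p.2 = 1)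

theorem K0_ok : ∀ p ∈ K0, Edge p.1 p.2 := by
  intro p hp
  simp only [K0, List.mem_cons, List.mem_filter, decide_eq_true_eq] at hp
  rcases hp with rfl | rfl | ⟨-, h1, h2⟩
  · simp [Edge, gn, tr, wd, sg, kp, psi_apply]
  · simp [Edge, gn, tr, wd, sg, kp, psi_apply, Ux]
  · simp [Edge, tr, h1, h2]

set_option maxRecDepth 100000 in
theorem run_all : ∀ g i, (g, i) ∈ run crt K0 := by decide +kernel

theorem edges (g : Fin 3) (i : Fin 32) : Edge g i := run_ok crt K0 K0_ok _ (run_all g i)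

/-! Consequences: normality and the covering by cosets. -/
theorem tr_zero : tr 0 = 1 := by simp [tr, wd]
theorem tr_one : tr 1 = Ua := by simp [tr, wd, gn]

def zw : List (Fin 3 × Bool) :=
  [(1, true), (2, false), (1, true), (2, false), (1, true), (2, false), (1, true), (2, false)]
def ww : List (Fin 3 × Bool) :=
  [(2, false), (1, true), (2, false), (1, true), (2, false), (1, true), (2, false), (1, true)]

theorem Uz_eq : Uz = Ux ^ (4 : ℤ) := by rw [Uz, Ux]; norm_cast
theorem Uw_eq : Uw = Uy ^ (4 : ℤ) := by rw [Uw, Uy]; norm_cast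

def Kall : List (Fin 3 × Fin 32) := (List.finRange 3).product (List.finRange 32)

theorem a_z : Uz * Ua = Ua * Uz⁻¹ := by
  have h := trace_ok Kall (fun p _ => edges p.1 p.2) zw 1 1 1 ⟨-4, 0, 0⟩ (by decide +kernel)
  have e : ev zw = Uz := by simp [zw, ev, Uz, gn, pow_succ, mul_assoc]
  rw [e, tr_one, map_one, mul_one, psi_apply] at h
  rw [h, Uz_eq]; simp

theorem a_w : Uw * Ua = Ua * Uw := by
  have h := trace_ok Kall (fun p _ => edges p.1 p.2) ww 1 1 1 ⟨0, 4, 0⟩ (by decide +kernel)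
  have e : ev ww = Uw := by simp [ww, ev, Uw, gn, pow_succ, mul_assoc]
  rw [e, tr_one, map_one, mul_one, psi_apply] at h
  rw [h, Uw_eq]; simp

theorem zw_comm : Commute Uz Uw := by
  rw [Uz_eq, Uw_eq]; exact xy_zcomm 4 4

theorem b_z : Ub * Uz * Ub⁻¹ = Uw⁻¹ := by
  rw [Uz_eq, Uw_eq, b_xz, mul_inv_cancel_right, zpow_neg]
theorem b_w : Ub * Uw * Ub⁻¹ = Uz := by
  rw [Uz_eq, Uw_eq, b_yz, mul_inv_cancel_right]

theorem c_eq : Uc = Ux⁻¹ * Ub := by simp [Ux]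
theorem c_z : Uc * Uz * Uc⁻¹ = Uw⁻¹ := by
  have h1 : Uc * Uz * Uc⁻¹ = Ux⁻¹ * (Ub * Uz * Ub⁻¹) * Ux := by
    rw [c_eq]; group
  have h2 : Commute Ux⁻¹ Uw⁻¹ := by
    rw [Uw_eq]; exact (Commute.zpow_right (show Commute Ux Uy from xy_comm) 4).inv_inv
  rw [h1, b_z, h2.eq]; simp
theorem c_w : Uc * Uw * Uc⁻¹ = Uz := by
  have h1 : Uc * Uw * Uc⁻¹ = Ux⁻¹ * (Ub * Uw * Ub⁻¹) * Ux := by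
    rw [c_eq]; group
  rw [h1, b_w, Uz_eq]; group

/-- An element conjugating `z, w` into `z^{±1}, w^{±1}` and back normalizes `K_m`. -/
theorem conj_mem (m : ℕ) (g : UGroup)
    (hz : ∀ k : ℕ, g * Uz ^ k * g⁻¹ ∈ UK k) (hw : ∀ k : ℕ, g * Uw ^ k * g⁻¹ ∈ UK k)
    {u : UGroup} (hu : u ∈ UK m) : g * u * g⁻¹ ∈ UK m := by
  have : UK m ≤ (UK m).comap (MulAut.conj g).toMonoidHom := by
    rw [UK, Subgroup.closure_le]
    rintro x (rfl | rfl)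
    · exact hz m
    · exact hw m
  exact this hu

theorem z_mem (m : ℕ) : Uz ^ m ∈ UK m := Subgroup.subset_closure (by simp)
theorem w_mem (m : ℕ) : Uw ^ m ∈ UK m := Subgroup.subset_closure (by simp)

theorem gn_conj (m : ℕ) (g : Fin 3) {u : UGroup} (hu : u ∈ UK m) :
    gn g * u * (gn g)⁻¹ ∈ UK m := by
  fin_cases g
  · apply conj_mem m Ua _ _ hu
    · intro k
      have : Ua * Uz * Ua⁻¹ = Uz⁻¹ := by
        rw [mul_inv_eq_iff_eq_mul, eq_inv_mul_iff_mul_eq, ← mul_assoc, a_z]; simp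
      rw [← conj_pow, this, inv_pow]; exact inv_mem (z_mem k)
    · intro k
      have : Ua * Uw * Ua⁻¹ = Uw := by rw [← a_w]; simp
      rw [← conj_pow, this]; exact w_mem k
  · apply conj_mem m Ub _ _ hu
    · intro k; rw [← conj_pow, b_z, inv_pow]; exact inv_mem (w_mem k)
    · intro k; rw [← conj_pow, b_w]; exact z_mem k
  · apply conj_mem m Uc _ _ hu
    · intro k; rw [← conj_pow, c_z, inv_pow]; exact inv_mem (w_mem k)
    · intro k; rw [← conj_pow, c_w]; exact z_mem k

theorem gn_pow (g : Fin 3) : gn g ^ 4 = 1 := by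
  fin_cases g
  · exact ra
  · exact rb
  · exact rc

/-- Induction along positive words. -/
theorem U_ind (p : UGroup → Prop) (h1 : p 1) (hg : ∀ g u, p u → p (gn g * u)) (u : UGroup) :
    p u := by
  have hinv : ∀ g u, p u → p ((gn g)⁻¹ * u) := by
    intro g u hu
    have : (gn g)⁻¹ = gn g * (gn g * gn g) := by
      have := gn_pow g
      rw [inv_eq_iff_mul_eq_one]
      simpa only [pow_succ, pow_zero, one_mul, mul_assoc] using this
    rw [this, mul_assoc, mul_assoc]
    exact hg _ _ (hg _ _ (hg _ _ hu))
  have gof : ∀ g, (PresentedGroup.of g : UGroup) = gn g := by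
    intro g; fin_cases g <;> rfl
  have key : ∀ x ∈ Subgroup.closure (Set.range (PresentedGroup.of : Fin 3 → UGroup)),
      p x := by
    intro x hx
    induction hx using Subgroup.closure_induction_left with
    | one => exact h1
    | mul_left x hx y hy ih =>
      obtain ⟨g, rfl⟩ := hx; rw [gof]; exact hg _ _ ih
    | inv_mul_cancel x hx y hy ih =>
      obtain ⟨g, rfl⟩ := hx; rw [gof]; exact hinv _ _ ih
  exact key u (by rw [PresentedGroup.closure_range_of]; trivial)

theorem UK_normal (m : ℕ) : (UK m).Normal := by
  constructor
  intro n hn u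
  revert n
  apply U_ind (fun u => ∀ n ∈ UK m, u * n * u⁻¹ ∈ UK m)
  · intro n hn; simpa using hn
  · intro g u ih n hn
    have := gn_conj m g (ih n hn)
    simpa [mul_assoc] using this

theorem cover (u : UGroup) : ∃ i h, u = tr i * psi h := by
  apply U_ind (fun u => ∃ i h, u = tr i * psi h)
  · exact ⟨0, 1, by simp [tr_zero]⟩
  · rintro g u ⟨i, h, rfl⟩
    refine ⟨sg g i, kp g i * h, ?_⟩
    rw [← mul_assoc, edges g i, map_mul, mul_assoc]

/-! Lower bound: an action on `32 * 64 m^2` points. -/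
abbrev Pt (m : ℕ) : Type := Fin 32 × PG (ZMod (4 * m))

def rd (m : ℕ) : PG ℤ →* PG (ZMod (4 * m)) := PG.red (Int.castRingHom (ZMod (4 * m)))

theorem sg4 : ∀ g i, sg g (sg g (sg g (sg g i))) = i := by decide +kernel

def pm (m : ℕ) (g : Fin 3) : Equiv.Perm (Pt m) where
  toFun s := (sg g s.1, rd m (kp g s.1) * s.2)
  invFun s := (sg g (sg g (sg g s.1)), (rd m (kp g (sg g (sg g (sg g s.1)))))⁻¹ * s.2)
  left_inv s := by simp [sg4]
  right_inv s := by simp [sg4]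

def pt : List (Fin 3) → Fin 32 → Fin 32 × PG ℤ
  | [], i => (i, 1)
  | g :: l, i => (sg g (pt l i).1, kp g (pt l i).1 * (pt l i).2)

theorem pt_apply (m : ℕ) (l : List (Fin 3)) (i : Fin 32) (q : PG (ZMod (4 * m))) :
    (l.map (pm m)).prod (i, q) = ((pt l i).1, rd m (pt l i).2 * q) := by
  induction l with
  | nil => simp [pt]
  | cons g l ih =>
    rw [List.map_cons, List.prod_cons, Equiv.Perm.mul_apply, ih]
    simp [pm, pt, mul_assoc]

theorem pt_eq (m : ℕ) (l l' : List (Fin 3)) (h : ∀ i, pt l i = pt l' i) :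
    (l.map (pm m)).prod = (l'.map (pm m)).prod := by
  ext1 ⟨i, q⟩
  rw [pt_apply, pt_apply, h]

theorem pm_rels (m : ℕ) : ∀ r ∈ Urels, FreeGroup.lift (pm m) r = 1 := by
  have h1 := pt_eq m [0, 0, 0, 0] [] (by decide +kernel)
  have h2 := pt_eq m [1, 1, 1, 1] [] (by decide +kernel)
  have h3 := pt_eq m [2, 2, 2, 2] [] (by decide +kernel)
  have h4 := pt_eq m [0, 1, 0, 1] [] (by decide +kernel)
  have h5 := pt_eq m [1, 2, 1, 2] [] (by decide +kernel)
  have h6 := pt_eq m [0, 1, 2, 0, 1, 2] [] (by decide +kernel)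
  have h7 := pt_eq m [0, 0, 1, 1, 0, 0, 1, 1, 0, 0, 1, 1, 0, 0, 1, 1] [] (by decide +kernel)
  have h8 := pt_eq m [0, 0, 2, 2, 1, 1, 0, 2, 0, 2] [] (by decide +kernel)
  have h9 := pt_eq m [2, 0] [0, 1, 1, 2] (by decide +kernel)
  simp only [List.map_cons, List.map_nil, List.prod_cons, List.prod_nil, mul_one]
    at h1 h2 h3 h4 h5 h6 h7 h8 h9
  intro r hr
  simp only [Urels, Set.mem_insert_iff, Set.mem_singleton_iff] at hr
  rcases hr with rfl | rfl | rfl | rfl | rfl | rfl | rfl | rfl | rfl <;>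
    simp only [map_mul, map_pow, map_inv, FreeGroup.lift_apply_of, pow_succ, pow_zero, one_mul,
      mul_assoc]
  · exact h1
  · exact h2
  · exact h3
  · exact h4
  · exact h5
  · exact h6
  · exact h7
  · exact h8
  · rw [← mul_assoc (pm m 2), h9]; simpa [mul_assoc] using h2

def Phi (m : ℕ) : UGroup →* Equiv.Perm (Pt m) := PresentedGroup.toGroup (pm_rels m)

theorem Phi_gn (m : ℕ) (g : Fin 3) : Phi m (gn g) = pm m g := by
  have gof : gn g = (PresentedGroup.of g : UGroup) := by fin_cases g <;> rfl
  rw [gof]; exact PresentedGroup.toGroup.of (pm_rels m)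

/-- Pairs acting compatibly on the base block. -/
def Gam (m : ℕ) : Subgroup (UGroup × PG ℤ) where
  carrier := {s | ∀ q, Phi m s.1 (0, q) = (0, rd m s.2 * q)}
  one_mem' := by intro q; simp
  mul_mem' := by
    intro s t hs ht q
    simp only [Prod.fst_mul, Prod.snd_mul, map_mul, Equiv.Perm.mul_apply]
    rw [ht, hs, mul_assoc]
  inv_mem' := by
    intro s hs q
    simp only [Prod.fst_inv, Prod.snd_inv, map_inv]
    rw [Equiv.Perm.inv_eq_iff_eq, hs]; simp

theorem Gam_b (m : ℕ) : (Ub, (⟨0, 0, 1⟩ : PG ℤ)) ∈ Gam m := by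
  intro q
  have := Phi_gn m 1
  simp only [gn, Matrix.cons_val_one, Matrix.cons_val_zero] at this
  simp [this, pm, sg, kp]

theorem Gam_c (m : ℕ) : (Uc, (⟨-1, 0, 1⟩ : PG ℤ)) ∈ Gam m := by
  intro q
  have := Phi_gn m 2
  simp only [gn, Matrix.cons_val] at this
  simp [this, pm, sg, kp]

theorem Gam_x (m : ℕ) : (Ux, (⟨1, 0, 0⟩ : PG ℤ)) ∈ Gam m :=
  mul_mem (Gam_b m) (inv_mem (Gam_c m))
theorem Gam_y (m : ℕ) : (Uy, (⟨0, 1, 0⟩ : PG ℤ)) ∈ Gam m :=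
  mul_mem (inv_mem (Gam_c m)) (Gam_b m)

theorem Gam_psi (m : ℕ) (h : PG ℤ) : (psi h, h) ∈ Gam m := by
  have := mul_mem (mul_mem (zpow_mem (Gam_x m) h.x) (zpow_mem (Gam_y m) h.y))
    (pow_mem (Gam_b m) h.k.val)
  have e : (psi h, h) = (Ux, (⟨1, 0, 0⟩ : PG ℤ)) ^ h.x * (Uy, (⟨0, 1, 0⟩ : PG ℤ)) ^ h.y *
      (Ub, (⟨0, 0, 1⟩ : PG ℤ)) ^ h.k.val := by
    ext1
    · rfl
    · exact PG.decomp h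
  rw [e]; exact this

theorem pt_wd : ∀ i, pt (wd i) 0 = (i, 1) := by decide +kernel

theorem Phi_tr (m : ℕ) (i : Fin 32) (q) : Phi m (tr i) (0, q) = (i, q) := by
  have : Phi m (tr i) = ((wd i).map (pm m)).prod := by
    rw [tr, map_list_prod, List.map_map]
    congr 1
    apply List.map_congr_left
    intro g _; exact Phi_gn m g
  rw [this, pt_apply, pt_wd]; simp

theorem Phi_base (m : ℕ) (i : Fin 32) (h : PG ℤ) :
    Phi m (tr i * psi h) (0, 1) = (i, rd m h) := by
  have := Gam_psi m h 1
  simp only [mul_one] at this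
  rw [map_mul, Equiv.Perm.mul_apply, this, Phi_tr]

theorem card_Pt (m : ℕ) : Nat.card (Pt m) = 2048 * m ^ 2 := by
  rw [Nat.card_prod, Nat.card_congr (PG.equivProd _), Nat.card_prod, Nat.card_prod,
    Nat.card_zmod, Nat.card_fin, Nat.card_fin]
  ring

theorem rd_surj (m : ℕ) (q : PG (ZMod (4 * m))) : ∃ h, rd m h = q := by
  obtain ⟨x, hx⟩ := ZMod.intCast_surjective q.x
  obtain ⟨y, hy⟩ := ZMod.intCast_surjective q.y
  refine ⟨⟨x, y, q.k⟩, ?_⟩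
  ext1
  · simpa [rd, PG.red] using hx
  · simpa [rd, PG.red] using hy
  · rfl

theorem dvd_index (m : ℕ) : 2048 * m ^ 2 ∣ (UK m).index := by
  let _ : MulAction UGroup (Pt m) := MulAction.compHom (Pt m) (Phi m)
  have hs : ∀ u : UGroup, ∀ s : Pt m, u • s = Phi m u s := fun u s => rfl
  have hle : UK m ≤ MulAction.stabilizer UGroup ((0, 1) : Pt m) := by
    rw [UK, Subgroup.closure_le]
    have key : ∀ h : PG ℤ, rd m h = 1 → psi h ∈ MulAction.stabilizer UGroup ((0, 1) : Pt m) := by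
      intro h hh
      rw [MulAction.mem_stabilizer_iff, hs]
      have := Phi_base m 0 h
      rwa [tr_zero, one_mul, hh] at this
    have c4 : (4 : ZMod (4 * m)) * (m : ZMod (4 * m)) = 0 := by
      have := ZMod.natCast_self (4 * m); push_cast at this; exact this
    rintro x (rfl | rfl)
    · have e : Uz ^ m = psi ⟨4 * m, 0, 0⟩ := by
        rw [psi_apply, Uz_eq, ← zpow_natCast, ← zpow_mul]; simp
      rw [e]; apply key
      simp [rd, PG.red, PG.one_def, c4]
    · have e : Uw ^ m = psi ⟨0, 4 * m, 0⟩ := by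
        rw [psi_apply, Uw_eq, ← zpow_natCast, ← zpow_mul]; simp
      rw [e]; apply key
      simp [rd, PG.red, PG.one_def, c4]
  have hidx := Subgroup.index_dvd_of_le hle
  have horb : MulAction.orbit UGroup ((0, 1) : Pt m) = Set.univ := by
    ext ⟨i, q⟩
    simp only [Set.mem_univ, iff_true]
    obtain ⟨h, rfl⟩ := rd_surj m q
    exact ⟨tr i * psi h, Phi_base m i h⟩
  rw [MulAction.index_stabilizer, horb, Set.ncard_univ, card_Pt] at hidx
  exact hidx

/-- Upper bound: the points of the model surject onto the quotient. -/
def cmap (m : ℕ) (s : Pt m) : UGroup ⧸ UK m :=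
  QuotientGroup.mk (tr s.1 * psi ⟨s.2.x.cast, s.2.y.cast, s.2.k⟩)

theorem zpow_emod_aux {G : Type} [Group G] {g : G} {N : ℕ} (h : g ^ N = 1) (p : ℤ) :
    g ^ (p % (N : ℤ)) = g ^ p := by
  conv_rhs => rw [← Int.emod_add_mul_ediv p N, zpow_add, zpow_mul, zpow_natCast, h]
  simp

theorem cmap_surj (m : ℕ) : Function.Surjective (cmap m) := by
  have := UK_normal m
  intro u
  obtain ⟨u, rfl⟩ := QuotientGroup.mk_surjective u
  obtain ⟨i, h, rfl⟩ := cover u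
  refine ⟨(i, rd m h), ?_⟩
  have hx : (QuotientGroup.mk Ux : UGroup ⧸ UK m) ^ (4 * m) = 1 := by
    rw [← QuotientGroup.mk_pow, QuotientGroup.eq_one_iff, pow_mul]; exact z_mem m
  have hy : (QuotientGroup.mk Uy : UGroup ⧸ UK m) ^ (4 * m) = 1 := by
    rw [← QuotientGroup.mk_pow, QuotientGroup.eq_one_iff, pow_mul]; exact w_mem m
  simp only [cmap, psi_apply, rd, PG.red, MonoidHom.coe_mk, OneHom.coe_mk, eq_intCast,
    ZMod.coe_intCast, QuotientGroup.mk_mul, QuotientGroup.mk_zpow]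
  rw [zpow_emod_aux hx, zpow_emod_aux hy]

theorem index_eq (m : ℕ) (hm : 0 < m) : (UK m).index = 2048 * m ^ 2 := by
  have : NeZero (4 * m) := ⟨by omega⟩
  have : Finite (PG (ZMod (4 * m))) := Finite.of_equiv _ (PG.equivProd _).symm
  have : Finite (UGroup ⧸ UK m) := Finite.of_surjective _ (cmap_surj m)
  apply le_antisymm
  · rw [← card_Pt]
    exact Nat.card_le_card_of_surjective _ (cmap_surj m)
  · exact Nat.le_of_dvd (Nat.pos_of_ne_zero Subgroup.index_ne_zero_of_finite) (dvd_index m)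

theorem U_solvable : Group.IsSolvable UGroup := by
  have := UK_normal 1
  have hc : Nat.card (UGroup ⧸ UK 1) = 2 ^ 11 := by
    have := index_eq 1 one_pos
    rw [Subgroup.index] at this
    rw [this]; norm_num
  have : Fact (Nat.Prime 2) := ⟨Nat.prime_two⟩
  have : Finite (UGroup ⧸ UK 1) := Nat.finite_of_card_ne_zero (by rw [hc]; norm_num)
  have : Group.IsNilpotent (UGroup ⧸ UK 1) := (IsPGroup.of_card hc).isNilpotent
  have : Group.IsSolvable (UK 1) := by
    apply Group.isSolvable_of_comm
    have hcomm : ∀ x ∈ ({Uz ^ 1, Uw ^ 1} : Set UGroup), ∀ y ∈ ({Uz ^ 1, Uw ^ 1} : Set UGroup),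
        x * y = y * x := by
      rintro x (rfl | rfl) y (rfl | rfl)
      · rfl
      · simpa using zw_comm.eq
      · simpa using zw_comm.eq.symm
      · rfl
    have := Subgroup.isMulCommutative_closure hcomm
    exact fun x y => this.is_comm.comm x y
  exact Group.isSolvable_of_ker_le_range (UK 1).subtype (QuotientGroup.mk' (UK 1)) (by simp)

/-- For every positive integer `m`, the subgroup `K_m = ⟨z^m, w^m⟩` of `U` is a normal
subgroup of index `2048 m^2`, and the quotient `H_m = U / K_m` is solvable. -/
theorem Km_normal_index_solvable (m : ℕ) (hm : 0 < m) :
    ∃ hnorm : (UK m).Normal,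
      (UK m).index = 2048 * m ^ 2 ∧
      (letI := hnorm; IsSolvable (UGroup ⧸ UK m)) := by
  have := U_solvable
  have := UK_normal m
  exact ⟨UK_normal m, index_eq m hm, (inferInstance : Group.IsSolvable (UGroup ⧸ UK m))⟩
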